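/- Let n ≥ 1 and let T₁,…,Tₙ : H → Set H be monotone operators on a real Hilbert space H such that T_l is μ-strongly monotone for some l ∈ {1,…,n} and μ > 0, and T_i is single-valued and Γ_i-cocoercive for i = 1,…,n−1. Let z* ∈ H satisfy −(T₁z* + ⋯ + T_{n−1}z*) ∈ Tₙ z*, and set p* = (z*, T₁z*, …, T_{n−1}z*) ∈ Hⁿ. Suppose the projective splitting algorithm is run forever without termination: for every k ≥ 1, one iteration of projective splitting is performed at p^k = (z^k, w₁^k,…,w_{n−1}^k) (producing points x_i^k, y_i^k with y_i^k ∈ T_i x_i^k and satisfying the backward/forward relations, error conditions with parameters σ ∈ [0,1), δ ≥ 0, and stepsize conditions with bounds ρ̲, ρ̄, ρ̄_i), the gradient g_k of the separator function φ_k built from (x_i^k, y_i^k) is nonzero, and p^{k+1} = p^k − β_k (φ_k(p^k)/‖g_k‖_γ²) g_k with β_k ∈ [β̲, β̄], 0 < β̲ ≤ β̄ < 2. Then there exists r ∈ [0,1), independent of k, such that ‖p^{k+1} − p*‖_γ² ≤ r ‖p^k − p*‖_γ² for all k ≥ 1; in particular ‖p^k − p*‖_γ² ≤ r^{k−1} ‖p¹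 − p*‖_γ², so the iterates converge to p* at a linear rate. -/

import Mathlib

open scoped RealInnerProductSpace

lemma aux_min {ι : Type*} [Fintype ι] (f : ι → ℝ) (hf : ∀ i, 0 < f i) :
    ∃ c : ℝ, 0 < c ∧ ∀ i, c ≤ f i := by
  rcases isEmpty_or_nonempty ι with h | h
  · exact ⟨1, one_pos, fun i => h.elim i⟩
  · obtain ⟨i, _, hi⟩ := Finset.exists_min_image Finset.univ f Finset.univ_nonempty
    exact ⟨f i, hf i, fun j => hi j (Finset.mem_univ j)⟩

lemma aux_sq_add {H : Type*} [NormedAddCommGroup H] (a b : H) :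
    ‖a + b‖ ^ 2 ≤ 2 * ‖a‖ ^ 2 + 2 * ‖b‖ ^ 2 := by
  have h := norm_add_le a b
  have h0 := norm_nonneg (a + b)
  nlinarith [sq_nonneg (‖a‖ - ‖b‖)]

lemma aux_back {H : Type*} [NormedAddCommGroup H] [InnerProductSpace ℝ H]
    (z x y w e : H) (ρ ρlo ρhi σ : ℝ) (hlo : 0 < ρlo) (h1 : ρlo ≤ ρ) (h2 : ρ ≤ ρhi)
    (hσ1 : σ < 1) (h : x + ρ • y = z + ρ • w + e)
    (e1 : -(σ * ‖z - x‖ ^ 2) ≤ ⟪z - x, e⟫)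
    (e2 : ⟪e, y - w⟫ ≤ ρ * σ * ‖y - w‖ ^ 2) :
    min ((1 - σ) / ρhi) (ρlo * (1 - σ)) / 2 * (‖z - x‖ ^ 2 + ‖y - w‖ ^ 2) ≤ ⟪z - x, y - w⟫ := by
  have hρ : 0 < ρ := by linarith
  have he : e = ρ • (y - w) - (z - x) := by
    rw [smul_sub]
    have : e = x + ρ • y - (z + ρ • w) := by rw [h]; abel
    rw [this]; abel
  subst he
  rw [inner_sub_right, real_inner_smul_right, real_inner_self_eq_norm_sq] at e1
  rw [inner_sub_left, real_inner_smul_left, real_inner_self_eq_norm_sq] at e2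
  set I := ⟪z - x, y - w⟫
  set X := ‖z - x‖ ^ 2
  set Y := ‖y - w‖ ^ 2
  have hX : 0 ≤ X := sq_nonneg _
  have hY : 0 ≤ Y := sq_nonneg _
  have a1 : (1 - σ) / ρhi * X ≤ I := by
    have : (1 - σ) / ρhi * X = ((1 - σ) * X) / ρhi := by ring
    rw [this]
    have h3 : 0 ≤ (1 - σ) * X := mul_nonneg (by linarith) hX
    have hI : 0 ≤ I := by
      by_contra hc
      nlinarith
    rw [div_le_iff₀ (by linarith)]
    nlinarith
  have a2 : ρlo * (1 - σ) * Y ≤ I := by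
    have h3 : 0 ≤ (1 - σ) * Y := mul_nonneg (by linarith) hY
    nlinarith
  have b1 := mul_le_mul_of_nonneg_right (min_le_left ((1 - σ) / ρhi) (ρlo * (1 - σ))) hX
  have b2 := mul_le_mul_of_nonneg_right (min_le_right ((1 - σ) / ρhi) (ρlo * (1 - σ))) hY
  linarith

lemma aux_forw {H : Type*} [NormedAddCommGroup H] [InnerProductSpace ℝ H]
    (z x y w t : H) (ρ ρlo ρb L : ℝ) (hlo : 0 < ρlo) (h1 : ρlo ≤ ρ) (h2 : ρ ≤ ρb)
    (hL : 0 ≤ L) (hL1 : ρb * L < 1) (h : x = z - ρ • (t - w)) (hl : ‖t - y‖ ≤ L * ‖z - x‖) :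
    (1 / ρb - L) / (1 + (L + 1 / ρlo) ^ 2) * (‖z - x‖ ^ 2 + ‖y - w‖ ^ 2) ≤ ⟪z - x, y - w⟫ := by
  have hρ : 0 < ρ := by linarith
  have hb : 0 < ρb := by linarith
  have hzx : z - x = ρ • (t - w) := by rw [h]; abel
  have hyw : y - w = (t - w) - (t - y) := by abel
  have htw : t - w = (1 / ρ) • (z - x) := by
    rw [hzx, smul_smul, one_div, inv_mul_cancel₀ hρ.ne', one_smul]
  have hn : ‖t - w‖ = 1 / ρ * ‖z - x‖ := by
    rw [htw, norm_smul, Real.norm_of_nonneg (by positivity)]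
  have hX : 0 ≤ ‖z - x‖ := norm_nonneg _
  have hr : 1 / ρ ≤ 1 / ρlo := one_div_le_one_div_of_le hlo h1
  have hr2 : 1 / ρb ≤ 1 / ρ := one_div_le_one_div_of_le hρ h2
  have hn1 : ‖y - w‖ ≤ (L + 1 / ρlo) * ‖z - x‖ := by
    rw [hyw]
    have := norm_sub_le (t - w) (t - y)
    nlinarith
  have hn2 : ‖y - w‖ ^ 2 ≤ (L + 1 / ρlo) ^ 2 * ‖z - x‖ ^ 2 := by
    rw [← mul_pow]; exact pow_le_pow_left₀ (norm_nonneg _) hn1 2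
  have hi : (1 / ρb - L) * ‖z - x‖ ^ 2 ≤ ⟪z - x, y - w⟫ := by
    have h3 : ⟪z - x, t - w⟫ = 1 / ρ * ‖z - x‖ ^ 2 := by
      rw [htw, real_inner_smul_right, real_inner_self_eq_norm_sq]
    have h4 := real_inner_le_norm (z - x) (t - y)
    rw [hyw, inner_sub_right, h3]
    have h5 : ‖z - x‖ * ‖t - y‖ ≤ L * ‖z - x‖ ^ 2 := by nlinarith
    have h6 := mul_le_mul_of_nonneg_right hr2 (sq_nonneg ‖z - x‖)
    linarith
  have hp : 0 ≤ 1 / ρb - L := by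
    rw [sub_nonneg, le_div_iff₀ hb]; linarith
  refine le_trans ?_ hi
  rw [div_mul_eq_mul_div, div_le_iff₀ (by positivity), mul_assoc]
  apply mul_le_mul_of_nonneg_left _ hp
  linarith

lemma aux_real (P P' φ D π β βlo βhi c C κ K S E : ℝ)
    (hβlo : 0 < βlo) (hβhi : βhi < 2) (h1 : βlo ≤ β) (h2 : β ≤ βhi)
    (hc : 0 < c) (hC : 0 < C) (hκ : 0 < κ) (hK : 0 < K) (hS : 0 ≤ S) (hE : 0 ≤ E)
    (hπ : 0 < π) (hφ : c * S ≤ φ) (hπS : π ≤ C * S) (hD : κ * E ≤ D)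
    (hP : P ≤ K * (S + E))
    (hP' : P' = P - 2 * (β * φ / π) * (φ + D) + (β * φ / π) ^ 2 * π) :
    P' ≤ (1 - min (βlo * (2 - βhi) * (c / C) * c) (2 * βlo * (c / C) * κ) / K) * P := by
  set t := min (βlo * (2 - βhi) * (c / C) * c) (2 * βlo * (c / C) * κ) with ht
  have hq : c / C ≤ φ / π := by
    rw [div_le_div_iff₀ hC hπ]
    nlinarith
  set q := φ / π with hqd
  have hq0 : 0 < c / C := by positivity
  have e1 : P' = P - β * (2 - β) * q * φ - 2 * β * q * D := by
    rw [hP', hqd]; field_simp; ring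
  have hb0 : βlo * (2 - βhi) ≤ β * (2 - β) :=
    mul_le_mul h1 (by linarith) (by linarith) (by linarith)
  have hlo : 0 < βlo * (2 - βhi) := mul_pos hβlo (by linarith)
  have hcS : 0 ≤ c * S := by positivity
  have hκE : 0 ≤ κ * E := by positivity
  have a1 : βlo * (2 - βhi) * (c / C) * (c * S) ≤ β * (2 - β) * q * φ := by
    apply mul_le_mul _ hφ hcS
    · exact (mul_pos (lt_of_lt_of_le hlo hb0) (lt_of_lt_of_le hq0 hq)).le
    · exact mul_le_mul hb0 hq hq0.le (by linarith)
  have a2 : 2 * βlo * (c / C) * (κ * E) ≤ 2 * β * q * D := by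
    have hβ : 0 < β := by linarith
    have hqq : 0 < q := by linarith
    apply mul_le_mul _ hD hκE (by positivity)
    exact mul_le_mul (by linarith) hq hq0.le (by linarith)
  have ht0 : 0 < t := lt_min (by positivity) (by positivity)
  have b1 : t * S ≤ _ := mul_le_mul_of_nonneg_right (min_le_left _ _) hS
  have b2 : t * E ≤ _ := mul_le_mul_of_nonneg_right (min_le_right _ _) hE
  have c1 : t / K * P ≤ t * (S + E) := by
    calc t / K * P ≤ t / K * (K * (S + E)) := mul_le_mul_of_nonneg_left hP (by positivity)
      _ = _ := by field_simp
  nlinarith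

lemma aux_pi {H : Type*} [NormedAddCommGroup H] [InnerProductSpace ℝ H]
    (m : ℕ) (γ : ℝ) (hγ : 0 < γ) (z : H) (x y w : Fin (m+1) → H) (hw : ∑ i, w i = 0) :
    (1 / γ) * ‖∑ i : Fin (m+1), y i‖ ^ 2 + ∑ i : Fin m, ‖x i.castSucc - x (Fin.last m)‖ ^ 2 ≤
    ((1 / γ) * (m + 1) + (2 + 2 * m)) * ∑ i, (‖z - x i‖ ^ 2 + ‖y i - w i‖ ^ 2) := by
  have h1 : ‖∑ i : Fin (m+1), y i‖ ^ 2 ≤ (m + 1) * ∑ i, ‖y i - w i‖ ^ 2 := by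
    have e1 : ∑ i, y i = ∑ i, (y i - w i) := by rw [Finset.sum_sub_distrib, hw, sub_zero]
    rw [e1]
    calc ‖∑ i, (y i - w i)‖ ^ 2 ≤ (∑ i, ‖y i - w i‖) ^ 2 :=
          pow_le_pow_left₀ (norm_nonneg _) (norm_sum_le _ _) 2
      _ ≤ _ := by
        have := sq_sum_le_card_mul_sum_sq (s := (Finset.univ : Finset (Fin (m+1))))
          (f := fun i => ‖y i - w i‖)
        simpa using this
  have h2 : ∑ i : Fin m, ‖x i.castSucc - x (Fin.last m)‖ ^ 2 ≤
      (2 + 2 * m) * ∑ i, ‖z - x i‖ ^ 2 := by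
    have s1 : ∀ i : Fin m, ‖x i.castSucc - x (Fin.last m)‖ ^ 2 ≤
        2 * ‖z - x i.castSucc‖ ^ 2 + 2 * ‖z - x (Fin.last m)‖ ^ 2 := by
      intro i
      have := aux_sq_add (-(z - x i.castSucc)) (z - x (Fin.last m))
      rw [norm_neg] at this
      convert this using 3
      abel
    have s2 := Finset.sum_le_sum (s := Finset.univ) (fun i _ => s1 i)
    rw [Finset.sum_add_distrib, ← Finset.mul_sum] at s2
    simp only [Finset.sum_const, Finset.card_univ, Fintype.card_fin, nsmul_eq_mul] at s2
    rw [Fin.sum_univ_castSucc]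
    have s3 : 0 ≤ ∑ i : Fin m, ‖z - x i.castSucc‖ ^ 2 := Finset.sum_nonneg fun _ _ => sq_nonneg _
    have s4 := sq_nonneg ‖z - x (Fin.last m)‖
    have hm : (0:ℝ) ≤ m := Nat.cast_nonneg m
    nlinarith [mul_nonneg hm s3]
  rw [Finset.sum_add_distrib]
  have s3 : 0 ≤ ∑ i, ‖z - x i‖ ^ 2 := Finset.sum_nonneg fun _ _ => sq_nonneg _
  have s4 : 0 ≤ ∑ i, ‖y i - w i‖ ^ 2 := Finset.sum_nonneg fun _ _ => sq_nonneg _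
  have h3 := mul_le_mul_of_nonneg_left h1 (by positivity : 0 ≤ 1 / γ)
  have h4 : 0 ≤ 1 / γ * (m + 1) * ∑ i, ‖z - x i‖ ^ 2 := by positivity
  have h5 : 0 ≤ (2 + 2 * (m:ℝ)) * ∑ i, ‖y i - w i‖ ^ 2 := by positivity
  nlinarith

lemma aux_P {H : Type*} [NormedAddCommGroup H] [InnerProductSpace ℝ H]
    (m : ℕ) (γ : ℝ) (hγ : 0 < γ) (z zs : H) (x y w v : Fin (m+1) → H) (l : Fin (m+1)) :
    γ * ‖z - zs‖ ^ 2 + ∑ i : Fin m, ‖w i.castSucc - v i.castSucc‖ ^ 2 ≤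
    (2 * γ + 2) * ((∑ i, (‖z - x i‖ ^ 2 + ‖y i - w i‖ ^ 2)) +
      (‖x l - zs‖ ^ 2 + ∑ i : Fin m, ‖y i.castSucc - v i.castSucc‖ ^ 2)) := by
  have h1 : ‖z - zs‖ ^ 2 ≤ 2 * ‖z - x l‖ ^ 2 + 2 * ‖x l - zs‖ ^ 2 := by
    simpa using aux_sq_add (z - x l) (x l - zs)
  have h2 : ∑ i : Fin m, ‖w i.castSucc - v i.castSucc‖ ^ 2 ≤
      2 * (∑ i : Fin m, ‖y i.castSucc - w i.castSucc‖ ^ 2) +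
      2 * ∑ i : Fin m, ‖y i.castSucc - v i.castSucc‖ ^ 2 := by
    rw [Finset.mul_sum, Finset.mul_sum, ← Finset.sum_add_distrib]
    apply Finset.sum_le_sum
    intro i _
    have := aux_sq_add (-(y i.castSucc - w i.castSucc)) (y i.castSucc - v i.castSucc)
    rw [norm_neg] at this
    rwa [show -(y i.castSucc - w i.castSucc) + (y i.castSucc - v i.castSucc) =
      w i.castSucc - v i.castSucc by abel] at this
  have h3 : ‖z - x l‖ ^ 2 ≤ ∑ i, ‖z - x i‖ ^ 2 :=
    Finset.single_le_sum (f := fun i => ‖z - x i‖ ^ 2) (fun _ _ => sq_nonneg _) (Finset.mem_univ l)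
  have h4 : ∑ i : Fin m, ‖y i.castSucc - w i.castSucc‖ ^ 2 ≤ ∑ i, ‖y i - w i‖ ^ 2 := by
    rw [Fin.sum_univ_castSucc]
    linarith [sq_nonneg ‖y (Fin.last m) - w (Fin.last m)‖]
  rw [Finset.sum_add_distrib]
  have n1 : 0 ≤ ∑ i, ‖z - x i‖ ^ 2 := Finset.sum_nonneg fun _ _ => sq_nonneg _
  have n2 : 0 ≤ ∑ i, ‖y i - w i‖ ^ 2 := Finset.sum_nonneg fun _ _ => sq_nonneg _
  have n3 : 0 ≤ ∑ i : Fin m, ‖y i.castSucc - v i.castSucc‖ ^ 2 :=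
    Finset.sum_nonneg fun _ _ => sq_nonneg _
  have n4 := sq_nonneg ‖x l - zs‖
  nlinarith [mul_nonneg hγ.le n1, mul_nonneg hγ.le n2, mul_nonneg hγ.le n3, mul_nonneg hγ.le n4,
    mul_le_mul_of_nonneg_left h1 hγ.le, mul_le_mul_of_nonneg_left h3 hγ.le]

lemma aux_expand {H : Type*} [NormedAddCommGroup H] [InnerProductSpace ℝ H]
    (m : ℕ) (γ : ℝ) (hγ : 0 < γ) (z zs : H) (x y w v : Fin (m+1) → H) (hw : ∑ i, w i = 0)
    (hv : ∑ i, v i = 0) (α : ℝ) :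
    γ * ‖z - ((1 / γ) * α) • (∑ i, y i) - zs‖ ^ 2 +
      ∑ i : Fin m, ‖w i.castSucc - α • (x i.castSucc - x (Fin.last m)) - v i.castSucc‖ ^ 2 =
    (γ * ‖z - zs‖ ^ 2 + ∑ i : Fin m, ‖w i.castSucc - v i.castSucc‖ ^ 2)
     - 2 * α * ((∑ i, ⟪z - x i, y i - w i⟫) + ∑ i, ⟪x i - zs, y i - v i⟫)
     + α ^ 2 * ((1 / γ) * ‖∑ i, y i‖ ^ 2 + ∑ i : Fin m, ‖x i.castSucc - x (Fin.last m)‖ ^ 2) := by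
  have e1 : ‖z - ((1 / γ) * α) • (∑ i, y i) - zs‖ ^ 2 = ‖z - zs‖ ^ 2 -
      2 * ((1 / γ) * α) * ⟪z - zs, ∑ i, y i⟫ + ((1 / γ) * α) ^ 2 * ‖∑ i, y i‖ ^ 2 := by
    rw [show z - ((1 / γ) * α) • (∑ i, y i) - zs = (z - zs) - ((1 / γ) * α) • (∑ i, y i) by abel,
      norm_sub_sq_real, real_inner_smul_right, norm_smul, mul_pow, Real.norm_eq_abs, sq_abs]
    ring
  have e2 : ∀ i : Fin m, ‖w i.castSucc - α • (x i.castSucc - x (Fin.last m)) - v i.castSucc‖ ^ 2 =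
      ‖w i.castSucc - v i.castSucc‖ ^ 2 -
      2 * α * ⟪x i.castSucc - x (Fin.last m), w i.castSucc - v i.castSucc⟫ +
      α ^ 2 * ‖x i.castSucc - x (Fin.last m)‖ ^ 2 := by
    intro i
    rw [show w i.castSucc - α • (x i.castSucc - x (Fin.last m)) - v i.castSucc =
      (w i.castSucc - v i.castSucc) - α • (x i.castSucc - x (Fin.last m)) by abel,
      norm_sub_sq_real, real_inner_smul_right, norm_smul, mul_pow, Real.norm_eq_abs, sq_abs,
      real_inner_comm]
    ring
  have e3 : (∑ i, ⟪z - x i, y i - w i⟫) + ∑ i, ⟪x i - zs, y i - v i⟫ =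
      ⟪z - zs, ∑ i, y i⟫ +
      ∑ i : Fin m, ⟪x i.castSucc - x (Fin.last m), w i.castSucc - v i.castSucc⟫ := by
    have f1 : ∀ i, ⟪z - x i, y i - w i⟫ + ⟪x i - zs, y i - v i⟫ =
        ⟪z - zs, y i⟫ + (⟪x i - x (Fin.last m), w i - v i⟫ +
          (⟪x (Fin.last m) - z, w i⟫ - ⟪x (Fin.last m) - zs, v i⟫)) := by
      intro i
      simp only [inner_sub_left, inner_sub_right]
      ring
    rw [← Finset.sum_add_distrib, Finset.sum_congr rfl (fun i _ => f1 i),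
      Finset.sum_add_distrib, Finset.sum_add_distrib, Finset.sum_sub_distrib,
      ← inner_sum, ← inner_sum, ← inner_sum, hw, hv, Fin.sum_univ_castSucc
        (f := fun i => ⟪x i - x (Fin.last m), w i - v i⟫)]
    simp
  rw [e1, e3, Finset.sum_congr rfl (fun i _ => e2 i), Finset.sum_add_distrib,
    Finset.sum_sub_distrib, ← Finset.mul_sum, ← Finset.mul_sum]
  field_simp
  ring

/-- Linear convergence of projective splitting under strong monotonicity
of `T l` and cocoercivity of `T₁,…,T_{n−1}`: if the algorithm runs forever, there is
`r ∈ [0,1)`, independent of `k`, such that `‖p^{k+1} − p*‖_γ² ≤ r ‖p^k − p*‖_γ²` for all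
`k ≥ 1`, and in particular `‖p^k − p*‖_γ² ≤ r^{k−1} ‖p¹ − p*‖_γ²`.
Here `n = m+1 ≥ 1`, `p* = (z*, T₁z*, …, T_{n−1}z*)`, and
`‖(z,w)‖_γ² = γ‖z‖² + Σᵢ‖wᵢ‖²`. -/
theorem linear_convergence_strongly_monotone_cocoercive
    {H : Type*} [NormedAddCommGroup H] [InnerProductSpace ℝ H] [CompleteSpace H]
    (m : ℕ) (γ : ℝ) (hγ : 0 < γ)
    (T : Fin (m+1) → H → Set H)
    (hT : ∀ i, ∀ x x' y y' : H, y ∈ T i x → y' ∈ T i x' → 0 ≤ ⟪x - x', y - y'⟫)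
    (l : Fin (m+1)) (μ : ℝ) (hμ : 0 < μ)
    (hstrong : ∀ x x' y y' : H, y ∈ T l x → y' ∈ T l x' →
      μ * ‖x - x'‖ ^ 2 ≤ ⟪x - x', y - y'⟫)
    (Tc : Fin m → H → H) (Γ : Fin m → ℝ) (hΓ : ∀ i, 0 < Γ i)
    (hsingle : ∀ i : Fin m, ∀ u : H, T i.castSucc u = {Tc i u})
    (hcoco : ∀ i : Fin m, ∀ u v : H,
      (Γ i)⁻¹ * ‖Tc i u - Tc i v‖ ^ 2 ≤ ⟪u - v, Tc i u - Tc i v⟫)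
    (zstar : H) (hzstar : -(∑ i : Fin m, Tc i zstar) ∈ T (Fin.last m) zstar)
    (B F : Finset (Fin (m+1))) (hBF : Disjoint B F) (hBFunion : B ∪ F = Finset.univ)
    (Tfun : Fin (m+1) → H → H) (L : Fin (m+1) → ℝ) (hL0 : ∀ i ∈ F, 0 ≤ L i)
    (hFsingle : ∀ i ∈ F, ∀ u : H, T i u = {Tfun i u})
    (hLip : ∀ i ∈ F, ∀ u v : H, ‖Tfun i u - Tfun i v‖ ≤ L i * ‖u - v‖)
    (z : ℕ → H) (w : ℕ → Fin m → H) (wfull : ℕ → Fin (m+1) → H)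
    (hwfull : ∀ k, wfull k = Fin.snoc (w k) (-(∑ i : Fin m, w k i)))
    (x y : ℕ → Fin (m+1) → H) (ρ : ℕ → Fin (m+1) → ℝ) (e : ℕ → Fin (m+1) → H)
    (σ δ : ℝ) (hσ0 : 0 ≤ σ) (hσ1 : σ < 1) (hδ : 0 ≤ δ)
    (β : ℕ → ℝ) (βlo βhi : ℝ) (hβlo : 0 < βlo) (hβle : βlo ≤ βhi) (hβhi : βhi < 2)
    (hβ : ∀ k, 1 ≤ k → βlo ≤ β k ∧ β k ≤ βhi)
    (ρlo ρhi : ℝ) (ρbar : Fin (m+1) → ℝ) (hρlo : 0 < ρlo)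
    (hρge : ∀ k, 1 ≤ k → ∀ i, ρlo ≤ ρ k i)
    (hρB : ∀ k, 1 ≤ k → ∀ i ∈ B, ρ k i ≤ ρhi)
    (hρF : ∀ k, 1 ≤ k → ∀ i ∈ F, ρ k i ≤ ρbar i ∧ ρbar i * L i < 1)
    (hback : ∀ k, 1 ≤ k → ∀ i ∈ B, y k i ∈ T i (x k i) ∧
      x k i + ρ k i • y k i = z k + ρ k i • wfull k i + e k i)
    (hforw : ∀ k, 1 ≤ k → ∀ i ∈ F,
      x k i = z k - ρ k i • (Tfun i (z k) - wfull k i) ∧ y k i = Tfun i (x k i))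
    (herr1 : ∀ k, 1 ≤ k → ∀ i ∈ B, -(σ * ‖z k - x k i‖ ^ 2) ≤ ⟪z k - x k i, e k i⟫)
    (herr2 : ∀ k, 1 ≤ k → ∀ i ∈ B,
      ⟪e k i, y k i - wfull k i⟫ ≤ ρ k i * σ * ‖y k i - wfull k i‖ ^ 2)
    (herr3 : ∀ k, 1 ≤ k → ∀ i ∈ B, ‖e k i‖ ^ 2 ≤ δ * ‖z k - x k i‖ ^ 2)
    (π φval α : ℕ → ℝ)
    (hπ : ∀ k, 1 ≤ k → π k = (1 / γ) * ‖∑ i : Fin (m+1), y k i‖ ^ 2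
      + ∑ i : Fin m, ‖x k i.castSucc - x k (Fin.last m)‖ ^ 2)
    (hπpos : ∀ k, 1 ≤ k → 0 < π k)
    (hφval : ∀ k, 1 ≤ k →
      φval k = (∑ i : Fin m, ⟪z k - x k i.castSucc, y k i.castSucc - w k i⟫)
        + ⟪z k - x k (Fin.last m), y k (Fin.last m) + ∑ i : Fin m, w k i⟫)
    (hα : ∀ k, 1 ≤ k → α k = β k * φval k / π k)
    (hzupd : ∀ k, 1 ≤ k → z (k+1) = z k - ((1 / γ) * α k) • (∑ i : Fin (m+1), y k i))
    (hwupd : ∀ k, 1 ≤ k → ∀ i : Fin m,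
      w (k+1) i = w k i - α k • (x k i.castSucc - x k (Fin.last m))) :
    ∃ r : ℝ, 0 ≤ r ∧ r < 1 ∧
      (∀ k, 1 ≤ k →
        γ * ‖z (k+1) - zstar‖ ^ 2 + ∑ i : Fin m, ‖w (k+1) i - Tc i zstar‖ ^ 2
          ≤ r * (γ * ‖z k - zstar‖ ^ 2 + ∑ i : Fin m, ‖w k i - Tc i zstar‖ ^ 2)) ∧
      (∀ k, 1 ≤ k →
        γ * ‖z k - zstar‖ ^ 2 + ∑ i : Fin m, ‖w k i - Tc i zstar‖ ^ 2
          ≤ r ^ (k - 1) *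
            (γ * ‖z 1 - zstar‖ ^ 2 + ∑ i : Fin m, ‖w 1 i - Tc i zstar‖ ^ 2)) := by
  set v : Fin (m+1) → H := Fin.snoc (fun i => Tc i zstar) (-(∑ i : Fin m, Tc i zstar)) with hvd
  have hvc : ∀ i : Fin m, v i.castSucc = Tc i zstar := fun i => by simp [hvd]
  have hvl : v (Fin.last m) = -(∑ i : Fin m, Tc i zstar) := by simp [hvd]
  have hv : ∑ i, v i = 0 := by
    rw [Fin.sum_univ_castSucc, hvl, Finset.sum_congr rfl (fun i _ => hvc i)]; simp
  have hwc : ∀ k, ∀ i : Fin m, wfull k i.castSucc = w k i := fun k i => by simp [hwfull]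
  have hwl : ∀ k, wfull k (Fin.last m) = -(∑ i : Fin m, w k i) := fun k => by simp [hwfull]
  have hw : ∀ k, ∑ i, wfull k i = 0 := by
    intro k
    rw [Fin.sum_univ_castSucc, hwl, Finset.sum_congr rfl (fun i _ => hwc k i)]; simp
  have hvT : ∀ i, v i ∈ T i zstar := by
    intro i
    refine Fin.lastCases ?_ (fun j => ?_) i
    · rw [hvl]; exact hzstar
    · rw [hvc, hsingle]; rfl
  have hyT : ∀ k, 1 ≤ k → ∀ i, y k i ∈ T i (x k i) := by
    intro k hk i
    have : i ∈ B ∪ F := by rw [hBFunion]; exact Finset.mem_univ i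
    rcases Finset.mem_union.1 this with h | h
    · exact (hback k hk i h).1
    · rw [hFsingle i h, (hforw k hk i h).2]; rfl
  -- uniform lower bound for the separator
  have hci : ∀ i : Fin (m+1), ∃ c : ℝ, 0 < c ∧ ∀ k, 1 ≤ k →
      c * (‖z k - x k i‖ ^ 2 + ‖y k i - wfull k i‖ ^ 2) ≤
        ⟪z k - x k i, y k i - wfull k i⟫ := by
    intro i
    have : i ∈ B ∪ F := by rw [hBFunion]; exact Finset.mem_univ i
    rcases Finset.mem_union.1 this with h | h
    · refine ⟨min ((1 - σ) / ρhi) (ρlo * (1 - σ)) / 2, ?_, fun k hk => ?_⟩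
      · have h1 := hρge 1 le_rfl i
        have h2 := hρB 1 le_rfl i h
        have h3 : 0 < ρhi := by linarith
        have h4 : 0 < 1 - σ := by linarith
        have : 0 < min ((1 - σ) / ρhi) (ρlo * (1 - σ)) := lt_min (by positivity) (by positivity)
        positivity
      · exact aux_back _ _ _ _ (e k i) (ρ k i) ρlo ρhi σ hρlo (hρge k hk i) (hρB k hk i h) hσ1
          (hback k hk i h).2 (herr1 k hk i h) (herr2 k hk i h)
    · refine ⟨(1 / ρbar i - L i) / (1 + (L i + 1 / ρlo) ^ 2), ?_, fun k hk => ?_⟩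
      · have h1 := hρge 1 le_rfl i
        have h2 := hρF 1 le_rfl i h
        have h3 : 0 < ρbar i := by linarith [h2.1]
        have h4 : 0 < 1 / ρbar i - L i := by
          rw [sub_pos, lt_div_iff₀ h3]; linarith [h2.2]
        positivity
      · refine aux_forw _ _ _ _ (Tfun i (z k)) (ρ k i) ρlo (ρbar i) (L i) hρlo (hρge k hk i)
          (hρF k hk i h).1 (hL0 i h) (hρF k hk i h).2 (hforw k hk i h).1 ?_
        rw [(hforw k hk i h).2]
        exact hLip i h _ _
  choose cf hcf hcf' using hci
  obtain ⟨c, hc, hcle⟩ := aux_min cf hcf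
  obtain ⟨κ₀, hκ₀, hκΓ⟩ := aux_min (fun i => (Γ i)⁻¹) (fun i => inv_pos.2 (hΓ i))
  have hCpos : 0 < (1 / γ) * ((m:ℝ) + 1) + (2 + 2 * (m:ℝ)) := by positivity
  set C := (1 / γ) * ((m:ℝ) + 1) + (2 + 2 * (m:ℝ)) with hCd
  set κ := min μ κ₀ / 2 with hκd
  have hκ : 0 < κ := by have := lt_min hμ hκ₀; positivity
  set K := 2 * γ + 2 with hKd
  have hK : 0 < K := by positivity
  set t := min (βlo * (2 - βhi) * (c / C) * c) (2 * βlo * (c / C) * κ) with htd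
  have ht : 0 < t := by
    have : 0 < 2 - βhi := by linarith
    exact lt_min (by positivity) (by positivity)
  have hstep : ∀ k, 1 ≤ k →
      γ * ‖z (k+1) - zstar‖ ^ 2 + ∑ i : Fin m, ‖w (k+1) i - Tc i zstar‖ ^ 2
        ≤ (1 - t / K) * (γ * ‖z k - zstar‖ ^ 2 + ∑ i : Fin m, ‖w k i - Tc i zstar‖ ^ 2) := by
    intro k hk
    have hφ : φval k = ∑ i, ⟪z k - x k i, y k i - wfull k i⟫ := by
      rw [hφval k hk, Fin.sum_univ_castSucc, hwl, sub_neg_eq_add]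
      simp only [hwc]
    have hmono : ∀ i, 0 ≤ ⟪x k i - zstar, y k i - v i⟫ := fun i =>
      hT i _ _ _ _ (hyT k hk i) (hvT i)
    have d1 : μ * ‖x k l - zstar‖ ^ 2 ≤ ∑ i, ⟪x k i - zstar, y k i - v i⟫ :=
      (hstrong _ _ _ _ (hyT k hk l) (hvT l)).trans
        (Finset.single_le_sum (f := fun i => ⟪x k i - zstar, y k i - v i⟫)
          (fun i _ => hmono i) (Finset.mem_univ l))
    have d2 : κ₀ * ∑ i : Fin m, ‖y k i.castSucc - v i.castSucc‖ ^ 2 ≤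
        ∑ i, ⟪x k i - zstar, y k i - v i⟫ := by
      rw [Fin.sum_univ_castSucc, Finset.mul_sum]
      have : ∑ i : Fin m, κ₀ * ‖y k i.castSucc - v i.castSucc‖ ^ 2 ≤
          ∑ i : Fin m, ⟪x k i.castSucc - zstar, y k i.castSucc - v i.castSucc⟫ := by
        apply Finset.sum_le_sum
        intro i _
        have hy := hyT k hk i.castSucc
        rw [hsingle, Set.mem_singleton_iff] at hy
        rw [hvc, hy]
        exact (mul_le_mul_of_nonneg_right (hκΓ i) (sq_nonneg _)).trans (hcoco i _ _)
      linarith [hmono (Fin.last m)]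
    have n3 : 0 ≤ ∑ i : Fin m, ‖y k i.castSucc - v i.castSucc‖ ^ 2 :=
      Finset.sum_nonneg fun _ _ => sq_nonneg _
    have n4 := sq_nonneg ‖x k l - zstar‖
    have hS : 0 ≤ ∑ i, (‖z k - x k i‖ ^ 2 + ‖y k i - wfull k i‖ ^ 2) :=
      Finset.sum_nonneg fun _ _ => by positivity
    have hP := aux_P m γ hγ (z k) zstar (x k) (y k) (wfull k) v l
    have hX := aux_expand m γ hγ (z k) zstar (x k) (y k) (wfull k) v (hw k) hv (α k)
    have hpi := aux_pi m γ hγ (z k) (x k) (y k) (wfull k) (hw k)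
    simp only [hvc, hwc] at hP hX
    rw [← hπ k hk] at hX hpi
    rw [← hφ, hα k hk] at hX
    have hz' := hzupd k hk
    have hw' := hwupd k hk
    rw [hα k hk] at hz'
    simp only [hα k hk] at hw'
    simp only [hz', hw']
    simp only [hvc] at n3 d2
    refine aux_real _ _ (φval k) (∑ i, ⟪x k i - zstar, y k i - v i⟫) (π k) (β k) βlo βhi c C κ K
      _ _ hβlo hβhi (hβ k hk).1 (hβ k hk).2 hc hCpos hκ hK hS (add_nonneg n4 n3) (hπpos k hk)
      ?_ hpi ?_ hP hX
    · rw [hφ, Finset.mul_sum]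
      apply Finset.sum_le_sum
      intro i _
      exact (mul_le_mul_of_nonneg_right (hcle i) (by positivity)).trans (hcf' i k hk)
    · have b1 := mul_le_mul_of_nonneg_right (min_le_left μ κ₀) n4
      have b2 := mul_le_mul_of_nonneg_right (min_le_right μ κ₀) n3
      rw [hκd]
      linarith
  have hPn : ∀ k, 0 ≤ γ * ‖z k - zstar‖ ^ 2 + ∑ i : Fin m, ‖w k i - Tc i zstar‖ ^ 2 := fun k =>
    add_nonneg (by positivity) (Finset.sum_nonneg fun _ _ => sq_nonneg _)
  have hstep' : ∀ k, 1 ≤ k →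
      γ * ‖z (k+1) - zstar‖ ^ 2 + ∑ i : Fin m, ‖w (k+1) i - Tc i zstar‖ ^ 2
        ≤ max 0 (1 - t / K) *
          (γ * ‖z k - zstar‖ ^ 2 + ∑ i : Fin m, ‖w k i - Tc i zstar‖ ^ 2) := fun k hk =>
    (hstep k hk).trans (mul_le_mul_of_nonneg_right (le_max_right _ _) (hPn k))
  refine ⟨max 0 (1 - t / K), le_max_left _ _, max_lt one_pos ?_, hstep', ?_⟩
  · have : 0 < t / K := by positivity
    linarith
  · intro k hk
    induction k, hk using Nat.le_induction with
    | base => simp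
    | succ k hk ih =>
      refine (hstep' k hk).trans ?_
      refine (mul_le_mul_of_nonneg_left ih (le_max_left _ _)).trans (le_of_eq ?_)
      rw [← mul_assoc, ← pow_succ']
      congr 2
      omega
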